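/- There exists a finite alphabet Σ and a language L ⊆ Σ* such that L is generated by an admissible signed grammar over Σ but L is not a context-free language. -/

import Mathlib

/-- A parse-tree node: either a terminal leaf or an internal node labeled by a
nonterminal with a list of children. -/
inductive PTree (N : Type) (T : Type) : Type where
  | leaf (t : T) : PTree N T
  | node (A : N) (children : List (PTree N T)) : PTree N T

namespace PTree

variable {N T : Type}

/-- The symbol (nonterminal or terminal) labeling the root of a tree. -/
def toSymbol : PTree N T → N ⊕ T
  | leaf t => Sum.inr t
  | node A _ => Sum.inl A

/-- The yield of a parse tree: the word spelled by its leaves. -/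
def yield : PTree N T → List T
  | leaf t => [t]
  | node _ cs => cs.attach.flatMap (fun c => yield c.1)
decreasing_by simp only [PTree.node.sizeOf_spec]; have h := List.sizeOf_lt_of_mem c.2; omega

/-- The sign of a parse tree w.r.t. a sign assignment on productions:
the product of the signs of the productions used at its nodes. -/
def sign (σ : N × List (N ⊕ T) → ℤ) : PTree N T → ℤ
  | leaf _ => 1
  | node A cs => σ (A, cs.map toSymbol) * (cs.attach.map (fun c => sign σ c.1)).prod
decreasing_by simp only [PTree.node.sizeOf_spec]; have h := List.sizeOf_lt_of_mem c.2; omega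

/-- Validity of a parse tree w.r.t. a set of productions: at every internal node,
the node label together with the list of symbols of its children is a production. -/
inductive Valid (R : Set (N × List (N ⊕ T))) : PTree N T → Prop where
  | leaf (t : T) : Valid R (PTree.leaf t)
  | node (A : N) (cs : List (PTree N T)) :
      (A, cs.map toSymbol) ∈ R → (∀ c ∈ cs, Valid R c) → Valid R (PTree.node A cs)

end PTree

/-- A signed grammar over a (finite) terminal alphabet `T`: a context-free grammar
with finitely many nonterminals and productions, together with a sign `1` or `-1`
attached to each production. -/
structure SignedGrammar (T : Type) : Type 1 where
  /-- the type of nonterminals -/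
  N : Type
  finN : Finite N
  /-- the start symbol -/
  start : N
  /-- the productions `A → α`, `α ∈ (N ∪ T)*` -/
  rules : Set (N × List (N ⊕ T))
  finRules : rules.Finite
  /-- the sign of each production -/
  sign : N × List (N ⊕ T) → ℤ
  sign_valid : ∀ r ∈ rules, sign r = 1 ∨ sign r = -1

namespace SignedGrammar

variable {T : Type}

/-- A parse tree over the grammar: a valid tree whose root is labeled by the start symbol. -/
def IsParseTree (G : SignedGrammar T) (t : PTree G.N T) : Prop :=
  PTree.Valid G.rules t ∧ t.toSymbol = Sum.inl G.start

/-- The set of parse trees over `G` with yield `w`. -/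
def parseTreesOf (G : SignedGrammar T) (w : List T) : Set (PTree G.N T) :=
  {t | G.IsParseTree t ∧ t.yield = w}

/-- `G` is admissible if every word has only finitely many parse trees. -/
def Admissible (G : SignedGrammar T) : Prop :=
  ∀ w : List T, (G.parseTreesOf w).Finite

/-- `n_w(G)`: the sum of the signs of all parse trees over `G` with yield `w`. -/
noncomputable def count (G : SignedGrammar T) (w : List T) : ℤ :=
  ∑ᶠ t ∈ G.parseTreesOf w, t.sign G.sign

/-- `G` generates the language `L` if `G` is admissible, `n_w(G) = 1` for every
`w ∈ L` and `n_w(G) = 0` for every `w ∉ L`. -/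
def Generates (G : SignedGrammar T) (L : Language T) : Prop :=
  G.Admissible ∧ (∀ w ∈ L, G.count w = 1) ∧ (∀ w ∉ L, G.count w = 0)

/-- An ordinary context-free grammar: every production has sign `+1`. -/
def Ordinary (G : SignedGrammar T) : Prop :=
  ∀ r ∈ G.rules, G.sign r = 1

/-- The language generated by `G` in the usual sense: all yields of parse trees. -/
def language (G : SignedGrammar T) : Language T :=
  {w | ∃ t : PTree G.N T, G.IsParseTree t ∧ t.yield = w}

/-- `G` is unambiguous if every word has at most one parse tree. -/
def Unambiguous (G : SignedGrammar T) : Prop :=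
  ∀ t₁ t₂ : PTree G.N T, G.IsParseTree t₁ → G.IsParseTree t₂ →
    t₁.yield = t₂.yield → t₁ = t₂

/-- The number of parse trees of `G` with yield `w` (degree of ambiguity of `w`). -/
noncomputable def ambCount (G : SignedGrammar T) (w : List T) : ℕ :=
  Nat.card {t : PTree G.N T // t ∈ G.parseTreesOf w}

end SignedGrammar


namespace SGProof

/-! ### Part 1: the signed grammar -/

abbrev NT := Option (Fin 3 × Fin 3)

def lft : Fin 3 → Fin 3 → List (Fin 3)
  | 0, 0 => [] | 0, 1 => [0] | 0, 2 => [0]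
  | 1, 0 => [0] | 1, 1 => [1] | 1, 2 => [1]
  | 2, 0 => [0] | 2, 1 => [0] | 2, 2 => [1]

def rgt : Fin 3 → Fin 3 → List (Fin 3)
  | 0, 0 => [2] | 0, 1 => [] | 0, 2 => [1]
  | 1, 0 => [] | 1, 1 => [] | 1, 2 => [2]
  | 2, 0 => [] | 2, 1 => [2] | 2, 2 => []

abbrev Rl := NT × List (NT ⊕ Fin 3)

def rLoop (x : Fin 3 × Fin 3) : Rl :=
  (some x, (lft x.1 x.2).map Sum.inr ++ Sum.inl (some x) :: (rgt x.1 x.2).map Sum.inr)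
def r01 (f : Fin 3) : Rl := (some (f, 0), [Sum.inl (some (f, 1))])
def r12 (f : Fin 3) : Rl := (some (f, 1), [Sum.inl (some (f, 2))])
def rE (f : Fin 3) : Rl := (some (f, 2), [])
def rS (f : Fin 3) : Rl := (none, [Sum.inl (some (f, 0))])

def theRules : Set Rl :=
  Set.range rLoop ∪ Set.range r01 ∪ Set.range r12 ∪ Set.range rE ∪ Set.range rS

def sg (r : Rl) : ℤ := if r = rS 2 then -1 else 1

def G : SignedGrammar (Fin 3) where
  N := NT
  finN := inferInstance
  start := none
  rules := theRules
  finRules := by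
    unfold theRules
    exact ((((Set.finite_range _).union (Set.finite_range _)).union (Set.finite_range _)).union
      (Set.finite_range _)).union (Set.finite_range _)
  sign := sg
  sign_valid := by
    intro r _
    unfold sg
    split_ifs <;> simp

abbrev Tr := PTree NT (Fin 3)

theorem yield_node (A : NT) (cs : List Tr) :
    (PTree.node A cs).yield = cs.flatMap PTree.yield := by
  rw [PTree.yield]
  simp [List.flatMap]

theorem sign_node (A : NT) (cs : List Tr) :
    (PTree.node A cs).sign sg = sg (A, cs.map PTree.toSymbol) * (cs.map (PTree.sign sg)).prod := by
  rw [PTree.sign]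
  simp

theorem sign_leaf (a : Fin 3) : (PTree.leaf a : Tr).sign sg = 1 := by
  rw [PTree.sign]

theorem yield_leaf (a : Fin 3) : (PTree.leaf a : Tr).yield = [a] := by
  rw [PTree.yield]

def loop (x : Fin 3 × Fin 3) (t : Tr) : Tr :=
  .node (some x) ((lft x.1 x.2).map .leaf ++ t :: (rgt x.1 x.2).map .leaf)

theorem flatMap_leaf (l : List (Fin 3)) : (l.map (PTree.leaf : Fin 3 → Tr)).flatMap PTree.yield = l := by
  induction l with
  | nil => rfl
  | cons a l ih => simp only [List.map_cons, List.flatMap_cons, ih, yield_leaf]; rfl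

theorem prod_leaf (l : List (Fin 3)) :
    ((l.map (PTree.leaf : Fin 3 → Tr)).map (PTree.sign sg)).prod = 1 := by
  induction l with
  | nil => rfl
  | cons a l ih => simp only [List.map_cons, List.prod_cons, ih, sign_leaf]; rfl

theorem yield_loop (x) (t : Tr) : (loop x t).yield = lft x.1 x.2 ++ t.yield ++ rgt x.1 x.2 := by
  unfold loop
  rw [yield_node, List.flatMap_append, List.flatMap_cons, flatMap_leaf, flatMap_leaf]
  simp

theorem sign_loop (x) (t : Tr) : (loop x t).sign sg = t.sign sg := by
  unfold loop
  rw [sign_node, List.map_append (f := PTree.sign sg), List.map_cons (f := PTree.sign sg),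
    List.prod_append, List.prod_cons, prod_leaf, prod_leaf]
  simp [sg, rS]

def tz (f : Fin 3) : ℕ → Tr
  | 0 => .node (some (f, 2)) []
  | r + 1 => loop (f, 2) (tz f r)
def ty (f : Fin 3) (r : ℕ) : ℕ → Tr
  | 0 => .node (some (f, 1)) [tz f r]
  | q + 1 => loop (f, 1) (ty f r q)
def tx (f : Fin 3) (r q : ℕ) : ℕ → Tr
  | 0 => .node (some (f, 0)) [ty f r q]
  | p + 1 => loop (f, 0) (tx f r q p)
def ts (f : Fin 3) (p q r : ℕ) : Tr := .node none [tx f r q p]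

theorem sym_tz (f r) : (tz f r).toSymbol = Sum.inl (some (f, 2)) := by cases r <;> rfl
theorem sym_ty (f r q) : (ty f r q).toSymbol = Sum.inl (some (f, 1)) := by cases q <;> rfl
theorem sym_tx (f r q p) : (tx f r q p).toSymbol = Sum.inl (some (f, 0)) := by cases p <;> rfl

theorem valid_loop {x} {t : Tr} (ht : t.Valid theRules) (hs : t.toSymbol = Sum.inl (some x)) :
    (loop x t).Valid theRules := by
  refine .node _ _ ?_ ?_
  · refine Or.inl (Or.inl (Or.inl (Or.inl ⟨x, ?_⟩)))
    have hl : ∀ a, (PTree.leaf a : Tr).toSymbol = Sum.inr a := fun _ => rfl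
    simp [rLoop, hs, hl, Function.comp_def]
  · intro c hc
    simp only [List.mem_append, List.mem_map, List.mem_cons] at hc
    rcases hc with ⟨a, _, rfl⟩ | rfl | ⟨a, _, rfl⟩
    · exact .leaf a
    · exact ht
    · exact .leaf a

theorem valid_tz (f r) : (tz f r).Valid theRules := by
  induction r with
  | zero => exact .node _ _ (Or.inl (Or.inr ⟨f, rfl⟩)) (by simp)
  | succ r ih => exact valid_loop ih (sym_tz f r)
theorem valid_ty (f r q) : (ty f r q).Valid theRules := by
  induction q with
  | zero =>
    exact .node _ _ (Or.inl (Or.inl (Or.inr ⟨f, by simp [r12, sym_tz]⟩))) (by simp [valid_tz])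
  | succ r ih => exact valid_loop ih (sym_ty _ _ _)
theorem valid_tx (f r q p) : (tx f r q p).Valid theRules := by
  induction p with
  | zero =>
    exact .node _ _ (Or.inl (Or.inl (Or.inl (Or.inr ⟨f, by simp [r01, sym_ty]⟩))))
      (by simp [valid_ty])
  | succ r ih => exact valid_loop ih (sym_tx _ _ _ _)
theorem valid_ts (f p q r) : (ts f p q r).Valid theRules :=
  .node _ _ (Or.inr ⟨f, by simp [rS, sym_tx]⟩) (by simp [valid_tx])

theorem map_leaf {cs : List Tr} {l : List (Fin 3)} (h : cs.map PTree.toSymbol = l.map Sum.inr) :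
    cs = l.map PTree.leaf := by
  induction l generalizing cs with
  | nil => simpa using h
  | cons a l ih =>
    cases cs with
    | nil => simp at h
    | cons c cs =>
      simp only [List.map_cons, List.cons.injEq] at h ⊢
      refine ⟨?_, ih h.2⟩
      cases c with
      | leaf t => simpa [PTree.toSymbol] using h.1
      | node A cs => simp [PTree.toSymbol] at h

def Q (t : Tr) : Prop :=
  ∀ A, t.toSymbol = Sum.inl A →
    match A with
    | none => ∃ f p q r, t = ts f p q r
    | some (f, 0) => ∃ r q p, t = tx f r q p
    | some (f, 1) => ∃ r q, t = ty f r q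
    | some (f, 2) => ∃ r, t = tz f r

theorem Q_of_valid (t : Tr) (h : t.Valid theRules) : Q t := by
  induction h with
  | leaf t => intro A h; simp [PTree.toSymbol] at h
  | node A cs hr _ ih =>
    intro A' hA
    simp only [PTree.toSymbol, Sum.inl.injEq] at hA
    subst hA
    rcases hr with (((⟨⟨f, l⟩, hf⟩ | ⟨f, hf⟩) | ⟨f, hf⟩) | ⟨f, hf⟩) | ⟨f, hf⟩
    · simp only [rLoop, Prod.mk.injEq] at hf
      obtain ⟨rfl, hf⟩ := hf
      have hf := hf.symm
      rw [List.map_eq_append_iff] at hf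
      obtain ⟨c1, c2, rfl, h1, h2⟩ := hf
      rw [List.map_eq_cons_iff] at h2
      obtain ⟨t, c3, rfl, h2, h3⟩ := h2
      have := ih t (by simp) _ h2
      rw [map_leaf h1, map_leaf h3]
      fin_cases l
      · obtain ⟨r, q, p, rfl⟩ := this
        exact ⟨r, q, p + 1, rfl⟩
      · obtain ⟨r, q, rfl⟩ := this
        exact ⟨r, q + 1, rfl⟩
      · obtain ⟨r, rfl⟩ := this
        exact ⟨r + 1, rfl⟩
    all_goals
      simp only [r01, r12, rE, rS, Prod.mk.injEq] at hf
      obtain ⟨rfl, hf⟩ := hf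
      have hf := hf.symm
    · rw [List.map_eq_singleton_iff] at hf
      obtain ⟨t, rfl, ht⟩ := hf
      obtain ⟨r, q, rfl⟩ := ih t (by simp) _ ht
      exact ⟨r, q, 0, rfl⟩
    · rw [List.map_eq_singleton_iff] at hf
      obtain ⟨t, rfl, ht⟩ := hf
      obtain ⟨r, rfl⟩ := ih t (by simp) _ ht
      exact ⟨r, 0, rfl⟩
    · rw [List.map_eq_nil_iff] at hf
      subst hf
      exact ⟨0, rfl⟩
    · rw [List.map_eq_singleton_iff] at hf
      obtain ⟨t, rfl, ht⟩ := hf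
      obtain ⟨r, q, p, rfl⟩ := ih t (by simp) _ ht
      exact ⟨f, p, q, r, rfl⟩

theorem sign_tz (f r) : (tz f r).sign sg = 1 := by
  induction r with
  | zero => rw [tz, sign_node]; simp [sg, rS]
  | succ r ih => rw [tz, sign_loop, ih]
theorem sign_ty (f r q) : (ty f r q).sign sg = 1 := by
  induction q with
  | zero => rw [ty, sign_node]; simp [sg, rS, sign_tz]
  | succ r ih => rw [ty, sign_loop, ih]
theorem sign_tx (f r q p) : (tx f r q p).sign sg = 1 := by
  induction p with
  | zero => rw [tx, sign_node]; simp [sg, rS, sign_ty]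
  | succ r ih => rw [tx, sign_loop, ih]
theorem sign_ts (f p q r) : (ts f p q r).sign sg = if f = 2 then -1 else 1 := by
  rw [ts, sign_node]; simp [sg, rS, sign_tx, sym_tx]

def W (i j k : ℕ) : List (Fin 3) :=
  List.replicate i 0 ++ List.replicate j 1 ++ List.replicate k 2

theorem W_inj {i j k i' j' k'} : W i j k = W i' j' k' ↔ i = i' ∧ j = j' ∧ k = k' := by
  constructor
  · intro h
    have h0 := congrArg (List.count 0) h
    have h1 := congrArg (List.count 1) h
    have h2 := congrArg (List.count 2) h
    simp [W, List.count_replicate] at h0 h1 h2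
    exact ⟨h0, h1, h2⟩
  · rintro ⟨rfl, rfl, rfl⟩; rfl

theorem W_a (i j k) : 0 :: W i j k = W (i + 1) j k := by simp [W, List.replicate_succ]
theorem W_b (j k) : 1 :: W 0 j k = W 0 (j + 1) k := by simp [W, List.replicate_succ]
theorem W_c (i j k) : W i j k ++ [2] = W i j (k + 1) := by simp [W, List.replicate_succ']
theorem W_b' (i j) : W i j 0 ++ [1] = W i (j + 1) 0 := by simp [W, List.replicate_succ']

theorem y0z (r) : (tz 0 r).yield = W r r 0 := by
  induction r with
  | zero => rw [tz, yield_node]; rfl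
  | succ r ih => rw [tz, yield_loop, ih]; simp [lft, rgt, ← W_a, ← W_b']
theorem y0y (r q) : (ty 0 r q).yield = W (q + r) r 0 := by
  induction q with
  | zero => rw [ty, yield_node]; simp [y0z]
  | succ q ih => rw [ty, yield_loop, ih]; simp [lft, rgt, W_a]; congr 1; omega
theorem y0x (r q p) : (tx 0 r q p).yield = W (q + r) r p := by
  induction p with
  | zero => rw [tx, yield_node]; simp [y0y]
  | succ q ih => rw [tx, yield_loop, ih]; simp [lft, rgt, W_c]
theorem y1z (r) : (tz 1 r).yield = W 0 r r := by
  induction r with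
  | zero => rw [tz, yield_node]; rfl
  | succ r ih => rw [tz, yield_loop, ih]; simp [lft, rgt, ← W_b, ← W_c]
theorem y1y (r q) : (ty 1 r q).yield = W 0 (q + r) r := by
  induction q with
  | zero => rw [ty, yield_node]; simp [y1z]
  | succ q ih => rw [ty, yield_loop, ih]; simp [lft, rgt, W_b]; congr 1; omega
theorem y1x (r q p) : (tx 1 r q p).yield = W p (q + r) r := by
  induction p with
  | zero => rw [tx, yield_node]; simp [y1y]
  | succ q ih => rw [tx, yield_loop, ih]; simp [lft, rgt, W_a]
theorem y2z (r) : (tz 2 r).yield = W 0 r 0 := by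
  induction r with
  | zero => rw [tz, yield_node]; rfl
  | succ r ih => rw [tz, yield_loop, ih]; simp [lft, rgt, ← W_b]
theorem y2y (r q) : (ty 2 r q).yield = W q r q := by
  induction q with
  | zero => rw [ty, yield_node]; simp [y2z]
  | succ q ih => rw [ty, yield_loop, ih]; simp [lft, rgt, ← W_a, ← W_c]
theorem y2x (r q p) : (tx 2 r q p).yield = W (p + q) r q := by
  induction p with
  | zero => rw [tx, yield_node]; simp [y2y]
  | succ p ih => rw [tx, yield_loop, ih]; simp [lft, rgt, W_a]; congr 1; omega

theorem y0 (p q r) : (ts 0 p q r).yield = W (q + r) r p := by rw [ts, yield_node]; simp [y0x]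
theorem y1 (p q r) : (ts 1 p q r).yield = W p (q + r) r := by rw [ts, yield_node]; simp [y1x]
theorem y2 (p q r) : (ts 2 p q r).yield = W (p + q) r q := by rw [ts, yield_node]; simp [y2x]

def P (f : Fin 3) (w : List (Fin 3)) : Set Tr := {t | (∃ p q r, t = ts f p q r) ∧ t.yield = w}

theorem parse_eq (w) : G.parseTreesOf w = P 0 w ∪ P 1 w ∪ P 2 w := by
  ext t
  constructor
  · rintro ⟨⟨hv, hs⟩, hy⟩
    obtain ⟨f, p, q, r, rfl⟩ := Q_of_valid t hv none hs
    fin_cases f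
    · exact Or.inl (Or.inl ⟨⟨p, q, r, rfl⟩, hy⟩)
    · exact Or.inl (Or.inr ⟨⟨p, q, r, rfl⟩, hy⟩)
    · exact Or.inr ⟨⟨p, q, r, rfl⟩, hy⟩
  · rintro ((⟨⟨p, q, r, rfl⟩, hy⟩ | ⟨⟨p, q, r, rfl⟩, hy⟩) | ⟨⟨p, q, r, rfl⟩, hy⟩) <;>
      exact ⟨⟨valid_ts _ _ _ _, rfl⟩, hy⟩

theorem P0_eq (i j k) : P 0 (W i j k) = if j ≤ i then {ts 0 k (i - j) j} else ∅ := by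
  ext t
  constructor
  · rintro ⟨⟨p, q, r, rfl⟩, hy⟩
    rw [y0, W_inj] at hy
    obtain ⟨rfl, rfl, rfl⟩ := hy
    simp
  · split_ifs with h
    · rintro rfl
      refine ⟨⟨_, _, _, rfl⟩, ?_⟩
      rw [y0, Nat.sub_add_cancel h]
    · exact fun h => h.elim
theorem P1_eq (i j k) : P 1 (W i j k) = if k ≤ j then {ts 1 i (j - k) k} else ∅ := by
  ext t
  constructor
  · rintro ⟨⟨p, q, r, rfl⟩, hy⟩
    rw [y1, W_inj] at hy
    obtain ⟨rfl, rfl, rfl⟩ := hy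
    simp
  · split_ifs with h
    · rintro rfl
      refine ⟨⟨_, _, _, rfl⟩, ?_⟩
      rw [y1, Nat.sub_add_cancel h]
    · exact fun h => h.elim
theorem P2_eq (i j k) : P 2 (W i j k) = if k ≤ i then {ts 2 (i - k) k j} else ∅ := by
  ext t
  constructor
  · rintro ⟨⟨p, q, r, rfl⟩, hy⟩
    rw [y2, W_inj] at hy
    obtain ⟨rfl, rfl, rfl⟩ := hy
    simp
  · split_ifs with h
    · rintro rfl
      refine ⟨⟨_, _, _, rfl⟩, ?_⟩
      rw [y2, Nat.sub_add_cancel h]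
    · exact fun h => h.elim

theorem P_empty (f w) (h : ∀ i j k, w ≠ W i j k) : P f w = ∅ := by
  ext t
  constructor
  · rintro ⟨⟨p, q, r, rfl⟩, hy⟩
    exfalso
    fin_cases f
    · exact h _ _ _ (hy.symm.trans (y0 _ _ _))
    · exact h _ _ _ (hy.symm.trans (y1 _ _ _))
    · exact h _ _ _ (hy.symm.trans (y2 _ _ _))
  · exact fun h => h.elim

theorem P_finite (f w) : (P f w).Finite := by
  by_cases h : ∀ i j k, w ≠ W i j k
  · rw [P_empty f w h]; exact Set.finite_empty
  · push Not at h
    obtain ⟨i, j, k, rfl⟩ := h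
    fin_cases f
    · change (P 0 _).Finite
      rw [P0_eq]; split_ifs <;> simp
    · change (P 1 _).Finite
      rw [P1_eq]; split_ifs <;> simp
    · change (P 2 _).Finite
      rw [P2_eq]; split_ifs <;> simp

theorem ts_f {f p q r f' p' q' r'} (h : ts f p q r = ts f' p' q' r') : f = f' := by
  simp only [ts, PTree.node.injEq, List.cons.injEq, and_true, true_and] at h
  have := congrArg PTree.toSymbol h
  rw [sym_tx, sym_tx] at this
  simpa using this

theorem P_disj {f g} (w) (h : f ≠ g) : Disjoint (P f w) (P g w) := by
  rw [Set.disjoint_left]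
  rintro t ⟨⟨p, q, r, rfl⟩, _⟩ ⟨⟨p', q', r', h'⟩, _⟩
  exact h (ts_f h')

theorem count_eq (w) : G.count w = (∑ᶠ t ∈ P 0 w, t.sign sg) + (∑ᶠ t ∈ P 1 w, t.sign sg) +
    ∑ᶠ t ∈ P 2 w, t.sign sg := by
  unfold SignedGrammar.count
  rw [parse_eq]
  rw [← finsum_mem_union (P_disj w (by decide)) (P_finite _ _) (P_finite _ _),
    ← finsum_mem_union _ ((P_finite _ _).union (P_finite _ _)) (P_finite _ _)]
  · rfl
  · exact Set.disjoint_union_left.2 ⟨P_disj w (by decide), P_disj w (by decide)⟩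

theorem count_W (i j k) : G.count (W i j k) =
    (if j ≤ i then 1 else 0) + (if k ≤ j then 1 else 0) + (if k ≤ i then -1 else 0) := by
  rw [count_eq, P0_eq, P1_eq, P2_eq]
  congr 1
  · congr 1 <;> split_ifs <;> simp [sign_ts]
  · split_ifs <;> simp [sign_ts]

theorem count_not_W (w) (h : ∀ i j k, w ≠ W i j k) : G.count w = 0 := by
  rw [count_eq, P_empty _ _ h, P_empty _ _ h, P_empty _ _ h]
  simp

def Cond (i j k : ℕ) : Prop := ¬ ((i < j ∧ j < k) ∨ (k ≤ i ∧ j < k) ∨ (i < j ∧ k ≤ i))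

def Lang : Language (Fin 3) := {w | ∃ i j k, w = W i j k ∧ Cond i j k}

theorem generates : G.Generates Lang := by
  refine ⟨?_, ?_, ?_⟩
  · intro w
    rw [parse_eq]
    exact ((P_finite _ _).union (P_finite _ _)).union (P_finite _ _)
  · rintro w ⟨i, j, k, rfl, h⟩
    rw [count_W]
    unfold Cond at h
    split_ifs <;> omega
  · intro w hw
    by_cases h : ∀ i j k, w ≠ W i j k
    · exact count_not_W w h
    · push Not at h
      obtain ⟨i, j, k, rfl⟩ := h
      have h : ¬ Cond i j k := fun h => hw ⟨i, j, k, rfl, h⟩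
      rw [count_W]
      unfold Cond at h
      split_ifs <;> omega

/-! ### Part 2: an Ogden-type pumping lemma -/

section Ogden

set_option linter.unusedSectionVars false

variable {T : Type} [DecidableEq T] (g : ContextFreeGrammar T)

inductive Gen : List (Symbol T g.NT) → List T → Prop
  | nil : Gen [] []
  | term (a : T) (s w) : Gen s w → Gen (.terminal a :: s) (a :: w)
  | nt (r : ContextFreeRule T g.NT) (s u v) : r ∈ g.rules → Gen r.output u → Gen s v →
      Gen (.nonterminal r.input :: s) (u ++ v)

variable {g}

theorem Gen.append {s t : List (Symbol T g.NT)} {u v : List T} (h1 : Gen g s u) (h2 : Gen g t v) :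
    Gen g (s ++ t) (u ++ v) := by
  induction h1 with
  | nil => exact h2
  | term a s w _ ih => exact .term _ _ _ ih
  | nt r s x y hr hx _ _ ih =>
    rw [List.append_assoc]
    exact .nt _ _ _ _ hr hx ih

theorem Gen.split {s t : List (Symbol T g.NT)} {w : List T} (h : Gen g (s ++ t) w) :
    ∃ u v, w = u ++ v ∧ Gen g s u ∧ Gen g t v := by
  induction s generalizing w with
  | nil => exact ⟨[], w, rfl, .nil, h⟩
  | cons a s ih =>
    rw [List.cons_append] at h
    cases h with
    | term a _ w h =>
      obtain ⟨u, v, rfl, hu, hv⟩ := ih h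
      exact ⟨a :: u, v, rfl, .term _ _ _ hu, hv⟩
    | nt r _ x y hr hx hy =>
      obtain ⟨u, v, rfl, hu, hv⟩ := ih hy
      exact ⟨x ++ u, v, by simp, .nt _ _ _ _ hr hx hu, hv⟩

theorem gen_terminals (w : List T) : Gen g (w.map .terminal) w := by
  induction w with
  | nil => exact .nil
  | cons a w ih => exact .term _ _ _ ih

theorem gen_of_derives {s : List (Symbol T g.NT)} {w : List T}
    {t : List (Symbol T g.NT)} (h : g.Derives s t) (ht : Gen g t w) : Gen g s w := by
  induction h using Relation.ReflTransGen.head_induction_on with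
  | refl => exact ht
  | head h _ ih =>
    obtain ⟨r, hr, hw⟩ := h
    obtain ⟨p, q, rfl, rfl⟩ := hw.exists_parts
    obtain ⟨x, y, rfl, hx, hy⟩ := Gen.split ih
    obtain ⟨x1, x2, rfl, hx1, hx2⟩ := Gen.split hx
    rw [List.append_assoc, List.append_assoc]
    exact hx1.append (.nt r q x2 y hr hx2 hy)

theorem derives_of_gen {s : List (Symbol T g.NT)} {w : List T} (h : Gen g s w) :
    g.Derives s (w.map .terminal) := by
  induction h with
  | nil => exact .refl _
  | term a s w _ ih => exact ih.append_left [.terminal a]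
  | nt r s u v hr _ _ ih1 ih2 =>
    have h0 : g.Produces [.nonterminal r.input] r.output := ⟨r, hr, .input_output⟩
    have h1 := (h0.trans_derives ih1).append_right s
    have h2 := ih2.append_left (u.map .terminal)
    rw [List.map_append]
    exact h1.trans h2

variable (c : T)

/-- sentential form with one nonterminal -/
def ctx (u : List T) (B : g.NT) (v : List T) : List (Symbol T g.NT) :=
  u.map .terminal ++ .nonterminal B :: v.map .terminal

def R (n : ℕ) (x y : g.NT × List T) : Prop :=
  ∃ u v, x.2 = u ++ y.2 ++ v ∧ g.Derives [.nonterminal x.1] (ctx u y.1 v) ∧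
    Gen g [.nonterminal y.1] y.2 ∧ n ≤ u.count c + v.count c

theorem derives_ctx {s : List (Symbol T g.NT)} {u v B t}
    (h : g.Derives s (ctx u B v)) (h2 : g.Derives [.nonterminal B] t) :
    g.Derives s (u.map .terminal ++ t ++ v.map .terminal) := by
  have := (h2.append_left (u.map .terminal)).append_right (v.map .terminal)
  refine h.trans ?_
  simpa [ctx] using this

theorem derives_ctx2 {s : List (Symbol T g.NT)} {u v B u' v' B'}
    (h : g.Derives s (ctx u B v)) (h2 : g.Derives [.nonterminal B] (ctx u' B' v')) :
    g.Derives s (ctx (u ++ u') B' (v' ++ v)) := by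
  have := derives_ctx h h2
  simpa [ctx] using this

theorem R.trans {n m} {x y z : g.NT × List T} (h : R c n x y) (h' : R c m y z) :
    R c (n + m) x z := by
  obtain ⟨u, v, h1, h2, h3, h4⟩ := h
  obtain ⟨u', v', h1', h2', h3', h4'⟩ := h'
  refine ⟨u ++ u', v' ++ v, ?_, derives_ctx2 h2 h2', h3', ?_⟩
  · rw [h1, h1']; simp
  · simp only [List.count_append]; omega

def K (d : ℕ) (x : g.NT × List T) : Prop :=
  ∀ e, 1 ≤ e → d * e < x.2.count c → ∃ y, R c 1 x y ∧ e < y.2.count c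

theorem key (d : ℕ) (hd : ∀ r ∈ g.rules, r.output.length ≤ d)
    {s : List (Symbol T g.NT)} {w : List T} (h : Gen g s w) :
    ∀ e, 1 ≤ e → s.length * e < w.count c → ∃ B u v w', w = u ++ w' ++ v ∧
      g.Derives s (ctx u B v) ∧ Gen g [.nonterminal B] w' ∧ e < w'.count c ∧ K c d (B, w') := by
  induction h with
  | nil => intro e _ h; simp at h
  | term a s w _ ih =>
    intro e he h
    have h1 : s.length * e < w.count c := by
      have : (a :: w).count c ≤ w.count c + 1 := by
        rw [List.count_cons]; split_ifs <;> omega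
      simp only [List.length_cons, Nat.add_mul] at h
      omega
    obtain ⟨B, u, v, w', rfl, h2, h3⟩ := ih e he h1
    refine ⟨B, a :: u, v, w', by simp, ?_, h3⟩
    exact h2.append_left [.terminal a]
  | nt r s x y hr hx hy ih1 ih2 =>
    intro e he h
    by_cases hc : e < x.count c
    · refine ⟨r.input, [], y, x, by simp, ?_, ?_, hc, ?_⟩
      · exact (derives_of_gen hy).append_left [.nonterminal r.input]
      · simpa using Gen.nt r [] x [] hr hx .nil
      · intro e' he' h'
        obtain ⟨B, u, v, w', hw, h2, h3, h4, h5⟩ := ih1 e' he'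
          (lt_of_le_of_lt (Nat.mul_le_mul_right _ (hd r hr)) h')
        have h0 : g.Produces [.nonterminal r.input] r.output := ⟨r, hr, .input_output⟩
        have h2 := h0.trans_derives h2
        by_cases hm : 1 ≤ u.count c + v.count c
        · exact ⟨(B, w'), ⟨u, v, hw, h2, h3, hm⟩, h4⟩
        · have : x.count c = w'.count c := by
            rw [hw]; simp only [List.count_append]; omega
          obtain ⟨z, hz, hz'⟩ := h5 e' he' (by rw [← this]; exact h')
          refine ⟨z, ?_, hz'⟩
          have := R.trans c (n := 0) (x := (r.input, x)) ⟨u, v, hw, h2, h3, Nat.zero_le _⟩ hz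
          simpa using this
    · have h1 : s.length * e < y.count c := by
        simp only [List.length_cons, Nat.add_mul, List.count_append] at h
        omega
      obtain ⟨B, u, v, w', rfl, h2, h3⟩ := ih2 e he h1
      refine ⟨B, x ++ u, v, w', by simp, ?_, h3⟩
      have h0 : g.Derives [.nonterminal r.input] (x.map .terminal) := by
        have := derives_of_gen (Gen.nt r [] x [] hr hx .nil)
        simpa using this
      have h4 := h0.append_right s
      have h5 := h2.append_left (x.map .terminal)
      have := h4.trans h5
      simpa [ctx] using this

theorem K_of_gen (d : ℕ) (hd : ∀ r ∈ g.rules, r.output.length ≤ d) (hd1 : 1 ≤ d)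
    (A w) (h : Gen g [.nonterminal A] w) : K c d (A, w) := by
  intro e he hw
  have h1 : 1 * e ≤ d * e := Nat.mul_le_mul_right _ hd1
  obtain ⟨B, u, v, w', h1, h2, h3, h4, h5⟩ := key c d hd h e he
    (by simp only [List.length_cons, List.length_nil]; simp only at hw; omega)
  by_cases hm : 1 ≤ u.count c + v.count c
  · exact ⟨(B, w'), ⟨u, v, h1, h2, h3, hm⟩, h4⟩
  · have : w.count c = w'.count c := by
      rw [h1]; simp only [List.count_append]; omega
    obtain ⟨z, hz, hz'⟩ := h5 e he (by simp only at hw ⊢; omega)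
    refine ⟨z, ?_, hz'⟩
    have := R.trans c (n := 0) (x := (A, w)) ⟨u, v, h1, h2, h3, Nat.zero_le _⟩ hz
    simpa using this

theorem chain (d : ℕ) (hd : ∀ r ∈ g.rules, r.output.length ≤ d) (hd1 : 1 ≤ d) (k : ℕ) :
    ∀ x : g.NT × List T, Gen g [.nonterminal x.1] x.2 → d ^ k < x.2.count c →
      ∃ l : List (g.NT × List T), l.length = k + 1 ∧ l.Pairwise (R c 1) ∧ ∀ y ∈ l, R c 0 x y := by
  have rfl0 : ∀ x : g.NT × List T, Gen g [.nonterminal x.1] x.2 → R c 0 x x := fun x hx =>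
    ⟨[], [], by simp, .refl _, hx, Nat.zero_le _⟩
  induction k with
  | zero =>
    intro x hx _
    exact ⟨[x], rfl, by simp, by simpa using rfl0 x hx⟩
  | succ k ih =>
    intro x hx hk
    obtain ⟨y, hy, hy'⟩ := K_of_gen c d hd hd1 x.1 x.2 hx (d ^ k) (Nat.one_le_pow _ _ hd1)
      (by rw [← pow_succ']; exact hk)
    obtain ⟨l, h1, h2, h3⟩ := ih y (by obtain ⟨_, _, _, _, h, _⟩ := hy; exact h) hy'
    have h4 : ∀ z ∈ l, R c 1 x z := fun z hz => R.trans c hy (h3 z hz)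
    refine ⟨x :: l, by simp [h1], List.pairwise_cons.2 ⟨h4, h2⟩, ?_⟩
    intro z hz
    rcases List.mem_cons.1 hz with rfl | hz
    · exact rfl0 _ hx
    · obtain ⟨u, v, a, b, e, _⟩ := h4 z hz
      exact ⟨u, v, a, b, e, Nat.zero_le _⟩

theorem pump_derives {A : g.NT} {x y : List T} (h : g.Derives [.nonterminal A] (ctx x A y))
    (n : ℕ) : g.Derives [.nonterminal A]
      (ctx (List.replicate n x).flatten A (List.replicate n y).flatten) := by
  induction n with
  | zero => exact .refl _
  | succ n ih =>
    have := derives_ctx2 ih h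
    rw [List.replicate_succ' (a := x), List.replicate_succ (a := y)]
    simpa using this

theorem ogden (g : ContextFreeGrammar T) : ∃ N : ℕ, ∀ w ∈ g.language, N ≤ w.count c →
    ∃ u x z y v : List T, w = u ++ x ++ z ++ y ++ v ∧ 1 ≤ x.count c + y.count c ∧
      ∀ n, u ++ (List.replicate n x).flatten ++ z ++ (List.replicate n y).flatten ++ v
        ∈ g.language := by
  classical
  let d := g.rules.sup (fun r => r.output.length) + 1
  have hd : ∀ r ∈ g.rules, r.output.length ≤ d := fun r hr =>
    (Finset.le_sup (f := fun r => r.output.length) hr).trans (Nat.le_succ _)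
  let ins := g.rules.image (fun r => r.input)
  refine ⟨d ^ ins.card + 1, fun w hw hN => ?_⟩
  have hg : Gen g [.nonterminal g.initial] w :=
    gen_of_derives ((g.mem_language_iff w).1 hw) (gen_terminals w)
  obtain ⟨l, h1, h2, h3⟩ := chain c d hd (Nat.succ_le_succ (Nat.zero_le _)) ins.card
    (g.initial, w) hg hN
  have hex : ∃ p q : g.NT × List T, R c 0 (g.initial, w) p ∧ R c 1 p q ∧ p.1 = q.1 := by
    by_contra hno
    push Not at hno
    have hnd : (l.map Prod.fst).Nodup := by
      rw [List.Nodup, List.pairwise_map]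
      exact h2.imp_of_mem (fun {a b} ha _ hab => hno a b (h3 a ha) hab)
    have hsub : (l.map Prod.fst).toFinset ⊆ ins := by
      intro A hA
      rw [List.mem_toFinset, List.mem_map] at hA
      obtain ⟨⟨A, w'⟩, hp, rfl⟩ := hA
      obtain ⟨_, _, _, _, h, _⟩ := h3 _ hp
      simp only at h ⊢
      cases h with
      | nt r _ _ _ hr _ _ => exact Finset.mem_image.2 ⟨r, hr, rfl⟩
    have := Finset.card_le_card hsub
    rw [List.toFinset_card_of_nodup hnd, List.length_map, h1] at this
    omega
  obtain ⟨⟨A, w1⟩, ⟨B, w2⟩, hp, hpq, hAB⟩ := hex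
  simp only at hAB
  subst hAB
  obtain ⟨u, v, ha, hb, _, _⟩ := hp
  obtain ⟨x, y, ha', hb', hz, hc⟩ := hpq
  simp only at ha ha' hb hb' hz hc
  refine ⟨u, x, w2, y, v, by rw [ha, ha']; simp, hc, fun n => ?_⟩
  rw [g.mem_language_iff]
  have := derives_ctx (derives_ctx2 hb (pump_derives hb' n)) (derives_of_gen hz)
  simpa using this

end Ogden

/-! ### Part 3: the language is not context-free -/

theorem W_count (i j k) : (W i j k).count 0 = i ∧ (W i j k).count 1 = j ∧
    (W i j k).count 2 = k := by
  simp [W, List.count_replicate]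

theorem W_sorted (i j k) : (W i j k).Pairwise (· ≤ ·) := by
  simp only [W, List.pairwise_append, List.mem_append, List.mem_replicate]
  refine ⟨⟨?_, ?_, ?_⟩, ?_, ?_⟩
  · simp [List.pairwise_replicate]
  · simp [List.pairwise_replicate]
  · rintro a ⟨_, rfl⟩ b ⟨_, rfl⟩; decide
  · simp [List.pairwise_replicate]
  · rintro a (⟨_, rfl⟩ | ⟨_, rfl⟩) b ⟨_, rfl⟩ <;> decide

theorem lang_cond {w} (h : w ∈ Lang) : Cond (w.count 0) (w.count 1) (w.count 2) := by
  obtain ⟨i, j, k, rfl, h⟩ := h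
  obtain ⟨h0, h1, h2⟩ := W_count i j k
  rwa [h0, h1, h2]

theorem lang_sorted {w} (h : w ∈ Lang) : w.Pairwise (· ≤ ·) := by
  obtain ⟨i, j, k, rfl, h⟩ := h
  exact W_sorted i j k

theorem pure_of_sq {x : List (Fin 3)} (h : (x ++ x).Pairwise (· ≤ ·)) :
    ∀ a b, a ≠ b → x.count a = 0 ∨ x.count b = 0 := by
  intro a b hab
  by_contra hcon
  push Not at hcon
  have ha : a ∈ x := List.count_pos_iff.1 (Nat.pos_of_ne_zero hcon.1)
  have hb : b ∈ x := List.count_pos_iff.1 (Nat.pos_of_ne_zero hcon.2)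
  have := (List.pairwise_append.1 h).2.2
  exact hab (le_antisymm (this a ha b hb) (this b hb a ha))

theorem count_rep (n : ℕ) (x : List (Fin 3)) (a : Fin 3) :
    (List.replicate n x).flatten.count a = n * x.count a := by
  induction n with
  | zero => simp
  | succ n ih => simp [List.replicate_succ, ih, Nat.add_mul, Nat.add_comm]

theorem not_cf : ¬ Lang.IsContextFree := by
  rintro ⟨g, hg⟩
  obtain ⟨N, hN⟩ := ogden (2 : Fin 3) g
  rw [hg] at hN
  have hNf := Nat.self_le_factorial N
  have hNp := Nat.factorial_pos N
  obtain ⟨M, hM⟩ : ∃ M, M = 2 * N.factorial := ⟨_, rfl⟩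
  obtain ⟨h0, h1, h2⟩ := W_count (N + M) (N + M - 1) N
  obtain ⟨u, x, z, y, v, hw, hc, hp⟩ := hN (W (N + M) (N + M - 1) N)
    ⟨_, _, _, rfl, by unfold Cond; omega⟩ (by rw [h2])
  have hs := lang_sorted (hp 2)
  have hx : (x ++ x).Pairwise (· ≤ ·) := by
    refine hs.sublist ?_
    have : (List.replicate 2 x).flatten = x ++ x := by simp [List.replicate_succ]
    rw [this]
    refine (List.sublist_append_right u (x ++ x)).trans ?_
    rw [List.append_assoc (u ++ (x ++ x)), List.append_assoc (u ++ (x ++ x))]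
    exact List.sublist_append_left _ _
  have hy : (y ++ y).Pairwise (· ≤ ·) := by
    refine hs.sublist ?_
    have : (List.replicate 2 y).flatten = y ++ y := by simp [List.replicate_succ]
    rw [this]
    exact (List.sublist_append_right _ (y ++ y)).trans (List.sublist_append_left _ v)
  have hx := pure_of_sq hx
  have hy := pure_of_sq hy
  rw [hw] at h0 h1 h2
  simp only [List.count_append] at h0 h1 h2
  have hcond := fun n => lang_cond (hp n)
  simp only [List.count_append, count_rep] at hcond
  have hx01 := hx 0 1 (by decide)
  have hx02 := hx 0 2 (by decide)
  have hx12 := hx 1 2 (by decide)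
  have hy01 := hy 0 1 (by decide)
  have hy02 := hy 0 2 (by decide)
  have hy12 := hy 1 2 (by decide)
  by_cases hb : x.count 1 + y.count 1 = 0
  · have hzle : x.count 2 + y.count 2 ≤ N := by omega
    obtain ⟨t, ht⟩ : (x.count 2 + y.count 2) ∣ M :=
      hM ▸ Dvd.dvd.mul_left (Nat.dvd_factorial hc hzle) 2
    have := hcond (1 + t)
    have e1 : x.count 1 = 0 := by omega
    have e2 : y.count 1 = 0 := by omega
    have ht' : t * x.count 2 + t * y.count 2 = M := by rw [ht]; ring
    simp only [Nat.add_mul, e1, e2, Nat.mul_zero, Nat.one_mul] at this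
    unfold Cond at this
    omega
  · have := hcond 3
    unfold Cond at this
    omega

end SGProof

/-- There is a language generated by an admissible signed grammar that is not context-free. -/
theorem signed_grammar_generates_non_contextfree :
    ∃ (T : Type) (_ : Fintype T) (L : Language T) (G : SignedGrammar T),
      G.Generates L ∧ ¬ L.IsContextFree := by
  exact ⟨Fin 3, inferInstance, SGProof.Lang, SGProof.G, SGProof.generates, SGProof.not_cf⟩
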